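/- Let θ̂ : ℝ → ℝ^d be a prediction-regularized MAP path for L and f, i.e. ∇L(θ̂(λ)) + λ∇f(θ̂(λ)) = 0 for all λ in a neighborhood of 0. Assume θ̂ is differentiable at 0, f is continuously differentiable on a neighborhood of θ̂(0), ∇L is differentiable at θ̂(0) with Hessian H = ∇²L(θ̂(0)), and that the precision matrix P = −H is symmetric positive definite. Then the derivative of λ ↦ f(θ̂(λ)) at λ = 0 is nonnegative, and it equals 0 if and only if ∇f(θ̂(0)) = 0; hence the RegVar quantity ⟨∇f(θ̂(0)), P⁻¹ ∇f(θ̂(0))⟩ is a valid (nonnegative) variance. -/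

import Mathlib

open scoped RealInnerProductSpace Topology

/-!
Write `H` for the derivative of `∇L` at `θ(0)`. Differentiating the stationarity equation
`∇L(θ(l)) + l • ∇f(θ(l)) = 0` at `l = 0` gives `H θ'(0) = -∇f(θ(0))`; continuity of `∇f` is
enough, because the factor `l` vanishes at `0`. The chain rule then turns the derivative of
`l ↦ f(θ(l))` into `⟪∇f(θ(0)), θ'(0)⟫ = ⟪θ'(0), -H θ'(0)⟫`, a value of the quadratic form of
`P = -H`.
-/

section ImplicitDerivative

variable {𝕜 E F : Type*} [NontriviallyNormedField 𝕜]
  [NormedAddCommGroup E] [NormedSpace 𝕜 E] [NormedAddCommGroup F] [NormedSpace 𝕜 F]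

theorem hasDerivAt_smul_of_eq_zero_of_continuousAt {c : 𝕜 → 𝕜} {c' a : 𝕜} {g : 𝕜 → F}
    (hc : HasDerivAt c c' a) (hca : c a = 0) (hg : ContinuousAt g a) :
    HasDerivAt (fun t => c t • g t) (c' • g a) a := by
  have slope_smul : slope (fun t => c t • g t) a = fun t => slope c a t • g t := by
    ext t
    simp only [slope_def_module, hca, zero_smul, sub_zero, smul_assoc]
  rw [hasDerivAt_iff_tendsto_slope, slope_smul]
  exact hc.tendsto_slope.smul (hg.tendsto.mono_left nhdsWithin_le_nhds)

theorem map_deriv_eq_neg_of_eventually_add_smul_eq_zero {G : E → F} {G' : E →L[𝕜] F}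
    {g : 𝕜 → F} {θ : 𝕜 → E} {v : E} (hG : HasFDerivAt G G' (θ 0)) (hg : ContinuousAt g 0)
    (hθ : HasDerivAt θ v 0) (hzero : ∀ᶠ t in 𝓝 0, G (θ t) + t • g t = 0) :
    G' v = -g 0 := by
  have deriv_sum : HasDerivAt (fun t => G (θ t) + t • g t) (G' v + (1 : 𝕜) • g 0) 0 :=
    (hG.comp_hasDerivAt 0 hθ).add
      (hasDerivAt_smul_of_eq_zero_of_continuousAt (hasDerivAt_id 0) rfl hg)
  have deriv_zero : HasDerivAt (fun t => G (θ t) + t • g t) 0 0 :=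
    (hasDerivAt_const (0 : 𝕜) (0 : F)).congr_of_eventuallyEq hzero
  rw [eq_neg_iff_add_eq_zero, ← one_smul 𝕜 (g 0)]
  exact deriv_sum.unique deriv_zero

end ImplicitDerivative

section Gradient

variable {𝕜 E : Type*} [RCLike 𝕜] [NormedAddCommGroup E] [InnerProductSpace 𝕜 E]
  [CompleteSpace E]

theorem continuousAt_gradient_of_contDiffAt {f : E → 𝕜} {x : E} {n : WithTop ℕ∞}
    (hf : ContDiffAt 𝕜 n f x) (hn : n ≠ 0) : ContinuousAt (gradient f) x :=
  (InnerProductSpace.toDual 𝕜 E).symm.continuous.continuousAt.comp (hf.continuousAt_fderiv hn)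

theorem hasDerivAt_comp_of_hasGradientAt {f : E → 𝕜} {f' v : E} {θ : 𝕜 → E} {a : 𝕜}
    (hf : HasGradientAt f f' (θ a)) (hθ : HasDerivAt θ v a) :
    HasDerivAt (fun t => f (θ t)) (inner 𝕜 f' v) a :=
  hf.hasFDerivAt.comp_hasDerivAt a hθ

end Gradient

section RegularizedPath

variable {E : Type*} [NormedAddCommGroup E] [InnerProductSpace ℝ E] [CompleteSpace E]
  {L f : E → ℝ} {θ : ℝ → E} {H : E →L[ℝ] E}

theorem gradient_eq_neg_hessian_deriv_of_stationary
    (hstat : ∀ᶠ l in 𝓝 (0 : ℝ), gradient L (θ l) + l • gradient f (θ l) = 0)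
    (hθ : DifferentiableAt ℝ θ 0) (hf : ContinuousAt (gradient f) (θ 0))
    (hL : HasFDerivAt (gradient L) H (θ 0)) :
    gradient f (θ 0) = -H (deriv θ 0) := by
  have path_gradient_continuous : ContinuousAt (fun l => gradient f (θ l)) 0 :=
    hf.comp (f := θ) hθ.continuousAt
  rw [map_deriv_eq_neg_of_eventually_add_smul_eq_zero hL path_gradient_continuous
    hθ.hasDerivAt hstat, neg_neg]

/- By Cauchy–Schwarz for the form `⟪u, -(H u)⟫`, every symmetric positive semidefinite `-H` is
covered, including singular precisions. -/
theorem regvar_variance_nonneg_general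
    (hstat : ∀ᶠ l in 𝓝 (0 : ℝ), gradient L (θ l) + l • gradient f (θ l) = 0)
    (hθ : DifferentiableAt ℝ θ 0)
    (hf : DifferentiableAt ℝ f (θ 0)) (hf' : ContinuousAt (gradient f) (θ 0))
    (hL : HasFDerivAt (gradient L) H (θ 0))
    (hpos : ∀ u : E, H u ≠ 0 → 0 < ⟪u, -(H u)⟫) :
    0 ≤ deriv (fun l => f (θ l)) 0 ∧
    (deriv (fun l => f (θ l)) 0 = 0 ↔ gradient f (θ 0) = 0) := by
  have gradient_eq : gradient f (θ 0) = -H (deriv θ 0) :=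
    gradient_eq_neg_hessian_deriv_of_stationary hstat hθ hf' hL
  have deriv_eq : deriv (fun l => f (θ l)) 0 = ⟪deriv θ 0, -H (deriv θ 0)⟫ := by
    rw [(hasDerivAt_comp_of_hasGradientAt hf.hasGradientAt hθ.hasDerivAt).deriv,
      real_inner_comm, gradient_eq]
  rw [deriv_eq, gradient_eq, neg_eq_zero]
  by_cases hessian_deriv : H (deriv θ 0) = 0
  · simp [hessian_deriv]
  · have quadratic_form_pos := hpos _ hessian_deriv
    exact ⟨quadratic_form_pos.le, iff_of_false quadratic_form_pos.ne' hessian_deriv⟩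

end RegularizedPath

/-- When the precision matrix `P = −H` is symmetric positive
definite, the RegVar derivative `d/dλ f(θ̂(λ))|₀` is nonnegative, and it is
zero iff `∇f(θ̂ 0) = 0`; hence `⟨∇f, P⁻¹ ∇f⟩` is a valid variance. -/
theorem regvar_variance_nonneg
    (d : ℕ) (L f : EuclideanSpace ℝ (Fin d) → ℝ)
    (θ : ℝ → EuclideanSpace ℝ (Fin d))
    (H : EuclideanSpace ℝ (Fin d) ≃L[ℝ] EuclideanSpace ℝ (Fin d))
    (hstat : ∀ᶠ l in 𝓝 (0 : ℝ),
      gradient L (θ l) + l • gradient f (θ l) = 0)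
    (hθ : DifferentiableAt ℝ θ 0)
    (hf : ContDiffAt ℝ 1 f (θ 0))
    (hL : HasFDerivAt (gradient L)
      (H : EuclideanSpace ℝ (Fin d) →L[ℝ] EuclideanSpace ℝ (Fin d)) (θ 0))
    (hsym : ∀ u v : EuclideanSpace ℝ (Fin d), ⟪-(H u), v⟫ = ⟪u, -(H v)⟫)
    (hpos : ∀ u : EuclideanSpace ℝ (Fin d), u ≠ 0 → 0 < ⟪u, -(H u)⟫) :
    0 ≤ deriv (fun l => f (θ l)) 0 ∧
    (deriv (fun l => f (θ l)) 0 = 0 ↔ gradient f (θ 0) = 0) := by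
  exact regvar_variance_nonneg_general hstat hθ (hf.differentiableAt one_ne_zero)
    (continuousAt_gradient_of_contDiffAt hf one_ne_zero) hL
    fun u hu => hpos u fun hu0 => hu (by simp [hu0])
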